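/- Let ⟨W,<⟩ be a strict linear order containing an infinite ascending chain of pairwise distinct elements of W, let ≤ be the reflexive closure of <, and let R be a binary relation on W with < ⊆ R ⊆ ≤. Let L be any set of first-order modal formulas with L(W,R) ⊆ L ⊆ L_c(W,R). Then ¬B⁺ ∈ L if and only if there is no function f : ℕ×ℕ → T satisfying (T1) and (T2). -/

import Mathlib

namespace FOML

/-- First-order modal formulas over a signature assigning to each arity `n` a type
`Pred n` of `n`-ary predicate letters; individual variables are indexed by `ℕ`.
(0-ary predicate letters are proposition letters.) -/
inductive Fml (Pred : ℕ → Type) : Type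
  | atom : {n : ℕ} → Pred n → (Fin n → ℕ) → Fml Pred
  | bot  : Fml Pred
  | imp  : Fml Pred → Fml Pred → Fml Pred
  | box  : Fml Pred → Fml Pred
  | all  : ℕ → Fml Pred → Fml Pred

namespace Fml

variable {Pred : ℕ → Type}

def neg (φ : Fml Pred) : Fml Pred := imp φ bot
def top : Fml Pred := neg bot
def and (φ ψ : Fml Pred) : Fml Pred := neg (imp φ (neg ψ))
def or (φ ψ : Fml Pred) : Fml Pred := imp (neg φ) ψ
def iff (φ ψ : Fml Pred) : Fml Pred := and (imp φ ψ) (imp ψ φ)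
def dia (φ : Fml Pred) : Fml Pred := neg (box (neg φ))
def ex (x : ℕ) (φ : Fml Pred) : Fml Pred := neg (all x (neg φ))

def bigAnd : List (Fml Pred) → Fml Pred
  | [] => top
  | φ :: l => and φ (bigAnd l)

def bigOr : List (Fml Pred) → Fml Pred
  | [] => bot
  | φ :: l => or φ (bigOr l)

/-- Iterated box: `□⁰φ = φ`, `□ⁿ⁺¹φ = □□ⁿφ`. -/
def boxN : ℕ → Fml Pred → Fml Pred
  | 0, φ => φ
  | n + 1, φ => box (boxN n φ)

/-- Replace every occurrence of `□` by `□⁺`, where `□⁺ψ = ψ ∧ □ψ`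
(equivalently, every `◇` by its dual `◇⁺ψ = ◇ψ ∨ ψ`). -/
def plus : Fml Pred → Fml Pred
  | atom P a => atom P a
  | bot => bot
  | imp φ ψ => imp (plus φ) (plus ψ)
  | box φ => and (plus φ) (box (plus φ))
  | all x φ => all x (plus φ)

end Fml

/-- A Kripke model with expanding domains based on the frame `⟨W, R⟩`:
a domain function `D` into nonempty subsets of the domain `Dom`, expanding along `R`,
and an interpretation `I` of predicate letters at each world, with
`I(w,P) ⊆ D(w)ⁿ` for `n`-ary `P`. -/
structure KModel (W : Type*) (R : W → W → Prop) (Pred : ℕ → Type) where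
  Dom : Type
  D : W → Set Dom
  D_ne : ∀ w, (D w).Nonempty
  D_mono : ∀ ⦃w v : W⦄, R w v → D w ⊆ D v
  I : W → (n : ℕ) → Pred n → (Fin n → Dom) → Prop
  I_dom : ∀ (w : W) (n : ℕ) (P : Pred n) (as : Fin n → Dom), I w n P as → ∀ i, as i ∈ D w

variable {W : Type*} {R : W → W → Prop} {Pred : ℕ → Type}

/-- Truth of a formula at a world of a Kripke model under an assignment. -/
def truth (M : KModel W R Pred) : Fml Pred → W → (ℕ → M.Dom) → Prop
  | .atom (n := n) P args, w, g => M.I w n P (fun i => g (args i))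
  | .bot, _, _ => False
  | .imp φ ψ, w, g => truth M φ w g → truth M ψ w g
  | .box φ, w, g => ∀ v : W, R w v → truth M φ v g
  | .all x φ, w, g => ∀ d ∈ M.D w, truth M φ w (Function.update g x d)

/-- A formula is true at a world `w` if it is true under every assignment
taking values in the domain of `w`. -/
def trueAt (M : KModel W R Pred) (w : W) (φ : Fml Pred) : Prop :=
  ∀ g : ℕ → M.Dom, (∀ x, g x ∈ M.D w) → truth M φ w g

/-- `φ ∈ L(W,R)`: validity on the frame `⟨W,R⟩` (truth in every model with
expanding domains based on it, at every world). -/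
def ValidOn (R : W → W → Prop) (φ : Fml Pred) : Prop :=
  ∀ (M : KModel W R Pred) (w : W), trueAt M w φ

/-- The model has (globally) constant domains. -/
def ConstDom (M : KModel W R Pred) : Prop := ∀ w v : W, M.D w = M.D v

/-- `φ ∈ L_c(W,R)`: truth in every model with constant domains based on `⟨W,R⟩`. -/
def ValidOnC (R : W → W → Prop) (φ : Fml Pred) : Prop :=
  ∀ (M : KModel W R Pred), ConstDom M → ∀ w : W, trueAt M w φ

/-- A finite set `T = {t₀, …, t_s}` of tile types (represented as `Fin (s+1)`, with
`t₀ = 0`), each with four edge colours. -/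
structure TileSet where
  s : ℕ
  left : Fin (s + 1) → ℕ
  right : Fin (s + 1) → ℕ
  up : Fin (s + 1) → ℕ
  down : Fin (s + 1) → ℕ

namespace TileSet

/-- (T1): colours match horizontally. -/
def T1 (ts : TileSet) (f : ℕ → ℕ → Fin (ts.s + 1)) : Prop :=
  ∀ n m : ℕ, ts.right (f n m) = ts.left (f (n + 1) m)

/-- (T2): colours match vertically. -/
def T2 (ts : TileSet) (f : ℕ → ℕ → Fin (ts.s + 1)) : Prop :=
  ∀ n m : ℕ, ts.up (f n m) = ts.down (f n (m + 1))

/-- (T3): the tile type `t₀` occurs infinitely often in the leftmost column. -/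
def T3 (ts : TileSet) (f : ℕ → ℕ → Fin (ts.s + 1)) : Prop :=
  {m : ℕ | f 0 m = 0}.Infinite

end TileSet

/-- The predicate letters used in the encoding: a binary letter `◁`; monadic letters
`M`, `P₀, …, P_{s+2}` and `P`; proposition letters `p` and `q`. -/
inductive Letter (s : ℕ) : ℕ → Type
  | lt : Letter s 2
  | M : Letter s 1
  | P : Fin (s + 3) → Letter s 1
  | Pm : Letter s 1
  | p : Letter s 0
  | q : Letter s 0

namespace Enc

/-- Formulas in the language of the encoding. -/
abbrev F (ts : TileSet) := Fml (Letter ts.s)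

/-- The list of all tile types. -/
def tiles (ts : TileSet) : List (Fin (ts.s + 1)) := List.finRange (ts.s + 1)

/-- Tile indices regarded as indices of the letters `P₀, …, P_{s+2}`. -/
def tl (ts : TileSet) (t : Fin (ts.s + 1)) : Fin (ts.s + 3) := ⟨t.1, by omega⟩

def pp (ts : TileSet) : F ts := .atom Letter.p Fin.elim0
def qq (ts : TileSet) : F ts := .atom Letter.q Fin.elim0
def Mx (ts : TileSet) (v : ℕ) : F ts := .atom Letter.M (fun _ => v)
def Px (ts : TileSet) (j : Fin (ts.s + 3)) (v : ℕ) : F ts := .atom (Letter.P j) (fun _ => v)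
def PP (ts : TileSet) (v : ℕ) : F ts := .atom Letter.Pm (fun _ => v)
def ltA (ts : TileSet) (v w : ℕ) : F ts := .atom Letter.lt ![v, w]

/-- `⟐φ = ◇(π ∧ ◇(¬π ∧ φ))`, for a "marker" formula `π` (the paper uses `π = p`,
and `π = ∀x P(x)` for the operator `⊡`). -/
def pdia (ts : TileSet) (π φ : F ts) : F ts := .dia (.and π (.dia (.and (.neg π) φ)))

/-- Iterated `⟐`. -/
def pdiaN (ts : TileSet) (π : F ts) : ℕ → F ts → F ts
  | 0, φ => φ
  | n + 1, φ => pdia ts π (pdiaN ts π n φ)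

/-- `U(x) = ⋀_{t ∈ T} ¬P_t(x)`, with the tile letters given by `Pf`. -/
def Ug (ts : TileSet) (Pf : Fin (ts.s + 1) → ℕ → F ts) (v : ℕ) : F ts :=
  .bigAnd ((tiles ts).map (fun t => .neg (Pf t v)))

/- The conjuncts of the formula `A`, parametrised by the formulas standing for
`x ◁ y` (`rel`), `M(x)` (`Mf`), `P_t(x)` (`Pf`) and `p` (`pf`); the individual
variables `x`, `y` are `0`, `1`. -/

/-- `A₀ = ∃x □U(x)` -/
def A0g (ts : TileSet) (Pf : Fin (ts.s + 1) → ℕ → F ts) : F ts :=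
  .ex 0 (.box (Ug ts Pf 0))

/-- `A₁ = ∃x(¬U(x) ∧ M(x))` -/
def A1g (ts : TileSet) (Mf : ℕ → F ts) (Pf : Fin (ts.s + 1) → ℕ → F ts) : F ts :=
  .ex 0 (.and (.neg (Ug ts Pf 0)) (Mf 0))

/-- `A₂ = ∀x∃y (x ◁ y)` -/
def A2g (ts : TileSet) (rel : ℕ → ℕ → F ts) : F ts := .all 0 (.ex 1 (rel 0 1))

/-- `A₃ = ∀x∀y(x◁y → □(∃x M(x) → x◁y))` -/
def A3g (ts : TileSet) (rel : ℕ → ℕ → F ts) (Mf : ℕ → F ts) : F ts :=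
  .all 0 (.all 1 (.imp (rel 0 1) (.box (.imp (.ex 0 (Mf 0)) (rel 0 1)))))

/-- `A₄ = ∀x∀y(x◁y → □(M(x) ↔ ¬p ∧ ⟐M(y) ∧ ¬⟐²M(y)))` -/
def A4g (ts : TileSet) (rel : ℕ → ℕ → F ts) (Mf : ℕ → F ts) (pf : F ts) : F ts :=
  .all 0 (.all 1 (.imp (rel 0 1)
    (.box (.iff (Mf 0)
      (.and (.neg pf) (.and (pdia ts pf (Mf 1)) (.neg (pdiaN ts pf 2 (Mf 1)))))))))

/-- `A₅ = ∀x∀y □⋀_{t∈T}(M(x) ∧ P_t(y) → □(M(x) → P_t(y)))` -/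
def A5g (ts : TileSet) (Mf : ℕ → F ts) (Pf : Fin (ts.s + 1) → ℕ → F ts) : F ts :=
  .all 0 (.all 1 (.box (.bigAnd ((tiles ts).map fun t =>
    .imp (.and (Mf 0) (Pf t 1)) (.box (.imp (Mf 0) (Pf t 1)))))))

/-- `A₆ = ∀x □⋀_{t∈T}(P_t(x) → ⋀_{t'≠t} ¬P_{t'}(x))` -/
def A6g (ts : TileSet) (Pf : Fin (ts.s + 1) → ℕ → F ts) : F ts :=
  .all 0 (.box (.bigAnd ((tiles ts).map fun t =>
    .imp (Pf t 0)
      (.bigAnd (((tiles ts).filter (fun t' => decide (t' ≠ t))).map fun t' => .neg (Pf t' 0))))))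

/-- `A₇ = ∀x∀y □⋀_{t∈T}(x◁y ∧ P_t(x) → ⋁_{right(t)=left(t')} P_{t'}(y))` -/
def A7g (ts : TileSet) (rel : ℕ → ℕ → F ts) (Pf : Fin (ts.s + 1) → ℕ → F ts) : F ts :=
  .all 0 (.all 1 (.box (.bigAnd ((tiles ts).map fun t =>
    .imp (.and (rel 0 1) (Pf t 0))
      (.bigOr (((tiles ts).filter fun t' => decide (ts.right t = ts.left t')).map
        fun t' => Pf t' 1))))))

/-- `A₈ = ∀x∀y □⋀_{t∈T}(M(x) ∧ P_t(y) → □(∃y(x◁y ∧ M(y)) → ⋁_{up(t)=down(t')} P_{t'}(y)))` -/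
def A8g (ts : TileSet) (rel : ℕ → ℕ → F ts) (Mf : ℕ → F ts)
    (Pf : Fin (ts.s + 1) → ℕ → F ts) : F ts :=
  .all 0 (.all 1 (.box (.bigAnd ((tiles ts).map fun t =>
    .imp (.and (Mf 0) (Pf t 1))
      (.box (.imp (.ex 1 (.and (rel 0 1) (Mf 1)))
        (.bigOr (((tiles ts).filter fun t' => decide (ts.up t = ts.down t')).map
          fun t' => Pf t' 1))))))))

/-- `A₉ = ∀x(M(x) → □⟐P_{t₀}(x))` -/
def A9g (ts : TileSet) (Mf : ℕ → F ts) (Pf : Fin (ts.s + 1) → ℕ → F ts) (pf : F ts) : F ts :=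
  .all 0 (.imp (Mf 0) (.box (pdia ts pf (Pf 0 0))))

/-- The list `[A₀, …, A₈]` (all conjuncts of `A` except `A₉`), parametrised. -/
def AlistB (ts : TileSet) (rel : ℕ → ℕ → F ts) (Mf : ℕ → F ts)
    (Pf : Fin (ts.s + 1) → ℕ → F ts) (pf : F ts) : List (F ts) :=
  [A0g ts Pf, A1g ts Mf Pf, A2g ts rel, A3g ts rel Mf, A4g ts rel Mf pf,
   A5g ts Mf Pf, A6g ts Pf, A7g ts rel Pf, A8g ts rel Mf Pf]

/-- The tile letters `P_{t₀}, …, P_{t_s}`, i.e. `P₀, …, P_s`. -/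
def PfA (ts : TileSet) : Fin (ts.s + 1) → ℕ → F ts := fun t v => Px ts (tl ts t) v

/-- The formula `A`: the conjunction of `A₀` through `A₉`. -/
def A (ts : TileSet) : F ts :=
  .bigAnd (AlistB ts (ltA ts) (Mx ts) (PfA ts) (pp ts) ++
    [A9g ts (Mx ts) (PfA ts) (pp ts)])

/-- The formula `B`: the conjunction of `A₀` through `A₈`. -/
def B (ts : TileSet) : F ts := .bigAnd (AlistB ts (ltA ts) (Mx ts) (PfA ts) (pp ts))

/-- `A₉• = ∀x(M(x) → □(∃y M(y) → ⟐(∃y M(y) → P_{t₀}(x))))` -/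
def A9bul (ts : TileSet) : F ts :=
  .all 0 (.imp (Mx ts 0) (.box (.imp (.ex 1 (Mx ts 1))
    (pdia ts (pp ts) (.imp (.ex 1 (Mx ts 1)) (PfA ts 0 0))))))

/-- The formula `A•`: the conjunction of `A₀` through `A₈` together with `A₉•`. -/
def Abullet (ts : TileSet) : F ts :=
  .bigAnd (AlistB ts (ltA ts) (Mx ts) (PfA ts) (pp ts) ++ [A9bul ts])

/-- `⟐(P_{s+1}(x) ∧ P_{s+2}(y))`, the formula substituted for `x ◁ y` in `A′`. -/
def relA' (ts : TileSet) (v w : ℕ) : F ts :=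
  pdia ts (pp ts) (.and (Px ts ⟨ts.s + 1, by omega⟩ v) (Px ts ⟨ts.s + 2, by omega⟩ w))

/-- The formula `A′`: the result of substituting `⟐(P_{s+1}(x) ∧ P_{s+2}(y))` for
`x ◁ y` throughout `A`. -/
def A' (ts : TileSet) : F ts :=
  .bigAnd (AlistB ts (relA' ts) (Mx ts) (PfA ts) (pp ts) ++
    [A9g ts (Mx ts) (PfA ts) (pp ts)])

/-- `∀x P(x)`, the marker formula of the operator `⊡`. -/
def pfS (ts : TileSet) : F ts := .all 0 (PP ts 0)

/-- `⊡φ = ◇(∀x P(x) ∧ ◇(¬∀x P(x) ∧ φ))`. -/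
def bdia (ts : TileSet) (φ : F ts) : F ts := pdia ts (pfS ts) φ

/-- Iterated `⊡`. -/
def bdiaN (ts : TileSet) (n : ℕ) (φ : F ts) : F ts := pdiaN ts (pfS ts) n φ

/-- `q ∧ P(v)`, the replacement of `M(v)`. -/
def MS (ts : TileSet) (v : ℕ) : F ts := .and (qq ts) (PP ts v)

/-- `βₙ(x) = ∃y(⊡^{s+4}(q ∧ P(y)) ∧ ¬⊡^{s+5}(q ∧ P(y)) ∧
⊡(⊡^{n+1}(q ∧ P(y)) ∧ ¬⊡^{n+2}(q ∧ P(y)) ∧ P(x)))`, and `βₙ(y)` with `x`, `y` exchanged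
(the variables `x`, `y` are `0`, `1`, so the bound variable is `1 - v`). -/
def beta (ts : TileSet) (n : Fin (ts.s + 3)) (v : ℕ) : F ts :=
  .ex (1 - v) (.and (bdiaN ts (ts.s + 4) (MS ts (1 - v)))
    (.and (.neg (bdiaN ts (ts.s + 5) (MS ts (1 - v))))
      (bdia ts (.and (bdiaN ts ((n : ℕ) + 1) (MS ts (1 - v)))
        (.and (.neg (bdiaN ts ((n : ℕ) + 2) (MS ts (1 - v)))) (PP ts v))))))

/-- The replacement `βₜ` of the tile letters. -/
def PfS (ts : TileSet) : Fin (ts.s + 1) → ℕ → F ts := fun t v => beta ts (tl ts t) v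

/-- `⊡(β_{s+1}(x) ∧ β_{s+2}(y))`, the replacement of `x ◁ y` in `A*`. -/
def relS (ts : TileSet) (v w : ℕ) : F ts :=
  bdia ts (.and (beta ts ⟨ts.s + 1, by omega⟩ v) (beta ts ⟨ts.s + 2, by omega⟩ w))

/-- `A₄* = ∀x∀y(⊡(β_{s+1}(x) ∧ β_{s+2}(y)) →
□(q ∧ P(x) ↔ ¬∀x P(x) ∧ ⊡^{s+4}(q ∧ P(y)) ∧ ¬⊡^{s+5}(q ∧ P(y))))` -/
def A4star (ts : TileSet) : F ts :=
  .all 0 (.all 1 (.imp (relS ts 0 1)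
    (.box (.iff (MS ts 0)
      (.and (.neg (pfS ts))
        (.and (bdiaN ts (ts.s + 4) (MS ts 1)) (.neg (bdiaN ts (ts.s + 5) (MS ts 1)))))))))

/-- `A₉* = ∀x(q ∧ P(x) → □⊡β₀(x))` -/
def A9star (ts : TileSet) : F ts :=
  .all 0 (.imp (MS ts 0) (.box (bdia ts (beta ts ⟨0, by omega⟩ 0))))

/-- The list `[A₀*, …, A₈*]`. -/
def BstarList (ts : TileSet) : List (F ts) :=
  [A0g ts (PfS ts), A1g ts (MS ts) (PfS ts), A2g ts (relS ts), A3g ts (relS ts) (MS ts),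
   A4star ts, A5g ts (MS ts) (PfS ts), A6g ts (PfS ts), A7g ts (relS ts) (PfS ts),
   A8g ts (relS ts) (MS ts) (PfS ts)]

/-- The formula `A*`: the conjunction of `A₀*` through `A₉*`. -/
def Astar (ts : TileSet) : F ts := .bigAnd (BstarList ts ++ [A9star ts])

/-- The formula `B*`: the conjunction of `A₀*` through `A₈*`. -/
def Bstar (ts : TileSet) : F ts := .bigAnd (BstarList ts)

/-- The formula `A⁺`: the result of replacing every `□` in `A*` by `□⁺`. -/
def Aplus (ts : TileSet) : F ts := (Astar ts).plus

/-- The formula `B⁺`: the result of replacing every `□` in `B*` by `□⁺`. -/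
def Bplus (ts : TileSet) : F ts := (Bstar ts).plus

end Enc

end FOML
namespace FOML
open Enc

/-!
Replacing `□` by `□⁺` amounts to evaluating over the reflexive closure of `R`, so `B⁺` over `R`
says what `B*` says over a preorder `≤`.

If `B*` holds at `w`, then `A₂*` yields columns `a 0 ◁ a 1 ◁ ⋯`, and `A₄*` yields rows
`w = v 0 ≤ v 1 ≤ ⋯` such that `q ∧ P(a m)` holds at `v m`. By `A₇*` and `A₈*` the tiles `βₜ`
propagate along columns and rows, and by `A₆*` they are unique, hence they tile the grid.

Conversely, given a tiling and a strictly ascending chain `c`, the chain is cut into blocks of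
`s + 4` stages of two elements each. The formula `∀x P(x)` holds exactly at the second element of
each stage, so that nested operators `⊡` count the stages ahead. The first element of block `m`
satisfies `q`, and `P` only of column `m`; the first element of the stage `n + 1` stages before the
end of the block lists in `P` the elements satisfying `βₙ` at the beginning of the block. The
elements of `W` off the chain are treated like the first element of the chain above them.
-/

section Truth

variable {W : Type*} {R : W → W → Prop} {Pred : ℕ → Type}
  {K : KModel W R Pred} {φ ψ : Fml Pred} {w : W} {g : ℕ → K.Dom}

@[simp] theorem truth_bot : truth K .bot w g ↔ False := Iff.rfl

@[simp] theorem truth_imp : truth K (.imp φ ψ) w g ↔ (truth K φ w g → truth K ψ w g) := Iff.rfl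

@[simp] theorem truth_box : truth K (.box φ) w g ↔ ∀ v, R w v → truth K φ v g := Iff.rfl

@[simp] theorem truth_all {x : ℕ} :
    truth K (.all x φ) w g ↔ ∀ d ∈ K.D w, truth K φ w (Function.update g x d) := Iff.rfl

@[simp] theorem truth_neg : truth K (.neg φ) w g ↔ ¬ truth K φ w g := Iff.rfl

@[simp] theorem truth_and : truth K (.and φ ψ) w g ↔ truth K φ w g ∧ truth K ψ w g := by
  simp [Fml.and]

@[simp] theorem truth_or : truth K (.or φ ψ) w g ↔ truth K φ w g ∨ truth K ψ w g := by
  simp [Fml.or, or_iff_not_imp_left]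

@[simp] theorem truth_iff : truth K (.iff φ ψ) w g ↔ (truth K φ w g ↔ truth K ψ w g) := by
  simp [Fml.iff, iff_def]

@[simp] theorem truth_dia : truth K (.dia φ) w g ↔ ∃ v, R w v ∧ truth K φ v g := by
  simp [Fml.dia]

@[simp] theorem truth_ex {x : ℕ} :
    truth K (.ex x φ) w g ↔ ∃ d ∈ K.D w, truth K φ w (Function.update g x d) := by
  simp [Fml.ex]

@[simp] theorem truth_bigAnd {l : List (Fml Pred)} :
    truth K (.bigAnd l) w g ↔ ∀ χ ∈ l, truth K χ w g := by
  induction l with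
  | nil => simp [Fml.bigAnd, Fml.top]
  | cons χ l ih => simp [Fml.bigAnd, ih]

@[simp] theorem truth_bigOr {l : List (Fml Pred)} :
    truth K (.bigOr l) w g ↔ ∃ χ ∈ l, truth K χ w g := by
  induction l with
  | nil => simp [Fml.bigOr]
  | cons χ l ih => simp [Fml.bigOr, ih]

end Truth

section ReflexiveClosure

variable {W : Type*} {R : W → W → Prop} {Pred : ℕ → Type}

/-- The model over the reflexive closure of `R` with the same domains and interpretation; it
evaluates `□` as `K` evaluates `□⁺`. -/
def KModel.reflGen (K : KModel W R Pred) : KModel W (Relation.ReflGen R) Pred where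
  __ := K
  D_mono := by
    rintro w v (_ | h)
    exacts [subset_rfl, K.D_mono h]

/-- The model over `R` with the same domains and interpretation as a model over the reflexive
closure of `R`, inverse to `KModel.reflGen`. -/
def KModel.ofReflGen (K : KModel W (Relation.ReflGen R) Pred) : KModel W R Pred where
  __ := K
  D_mono _ _ h := K.D_mono (.single h)

theorem truth_plus (K : KModel W R Pred) (φ : Fml Pred) (w : W) (g : ℕ → K.Dom) :
    truth K φ.plus w g ↔ truth K.reflGen φ w g := by
  induction φ generalizing w g with
  | atom | bot => rfl
  | imp φ ψ ihφ ihψ => exact imp_congr (ihφ w g) (ihψ w g)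
  | all x φ ih => exact forall₂_congr fun d _ => ih w (Function.update g x d)
  | box φ ih =>
    have hbox : (∀ v, R w v → truth K φ.plus v g) ↔ ∀ v, R w v → truth K.reflGen φ v g :=
      forall₂_congr fun v _ => ih v g
    simp only [Fml.plus, truth_and, truth_box, ih w g, hbox]
    exact ⟨by rintro ⟨hw, hR⟩ v (_ | hv); exacts [hw, hR v hv],
      fun h => ⟨h w .refl, fun v hv => h v (.single hv)⟩⟩

theorem validOn_plus {φ : Fml Pred} : ValidOn R φ.plus ↔ ValidOn (Relation.ReflGen R) φ :=
  ⟨fun h K w g hg => (truth_plus K.ofReflGen φ w g).1 (h K.ofReflGen w g hg),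
    fun h K w g hg => (truth_plus K φ w g).2 (h K.reflGen w g hg)⟩

theorem validOnC_plus {φ : Fml Pred} : ValidOnC R φ.plus ↔ ValidOnC (Relation.ReflGen R) φ :=
  ⟨fun h K hK w g hg => (truth_plus K.ofReflGen φ w g).1 (h K.ofReflGen hK w g hg),
    fun h K hK w g hg => (truth_plus K φ w g).2 (h K.reflGen hK w g hg)⟩

end ReflexiveClosure

namespace KModel

variable {W : Type*} {R : W → W → Prop} {ts : TileSet} (K : KModel W R (Letter ts.s))

/-- The letter `P` holds of `a` at `w`. -/
def P (a : K.Dom) (w : W) : Prop := K.I w 1 Letter.Pm fun _ => a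

/-- The marker `∀x P(x)` of the operator `⊡` holds at `w`. -/
def Full (w : W) : Prop := ∀ a ∈ K.D w, K.P a w

/-- The formula `q ∧ P(x)`, which replaces `M(x)`, holds of `a` at `w`: the world `w` is the row
whose index is the index of the column `a`. -/
def Row (a : K.Dom) (w : W) : Prop := K.I w 0 Letter.q Fin.elim0 ∧ K.P a w

/-- The operator `⊡`, acting on sets of worlds: reach `φ` by passing through a full world and then
leaving the full worlds. -/
def hop (φ : W → Prop) (w : W) : Prop :=
  ∃ v, R w v ∧ K.Full v ∧ ∃ u, R v u ∧ ¬ K.Full u ∧ φ u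

/-- The combination `⊡ⁿφ ∧ ¬⊡ⁿ⁺¹φ`: over a preorder, `n` is the maximal number of hops to `φ`. -/
def ExactHops (n : ℕ) (φ : W → Prop) (w : W) : Prop :=
  K.hop^[n] φ w ∧ ¬ K.hop^[n + 1] φ w

/-- The formula `βₙ`. For `n ≤ s` it says that the tile in column `a` and row `w` is `tₙ`. -/
def Beta (n : ℕ) (a : K.Dom) (w : W) : Prop :=
  ∃ d ∈ K.D w, K.ExactHops (ts.s + 4) (K.Row d) w ∧
    K.hop (fun u => K.ExactHops (n + 1) (K.Row d) u ∧ K.P a u) w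

/-- The formula `⊡(β_{s+1}(x) ∧ β_{s+2}(y))`, which replaces `x ◁ y`: the column `b` is next to
the column `a`. -/
def Next (a b : K.Dom) (w : W) : Prop :=
  K.hop (fun u => K.Beta (ts.s + 1) a u ∧ K.Beta (ts.s + 2) b u) w

/-- The conditions that the conjuncts `A₀*, …, A₈*` of `B*` impose at `w`, in this order. -/
structure TilingConditions (w : W) : Prop where
  untiled : ∃ a ∈ K.D w, ∀ v, R w v → ∀ t : Fin (ts.s + 1), ¬ K.Beta t a v
  tiled_row : ∃ a ∈ K.D w, (∃ t : Fin (ts.s + 1), K.Beta t a w) ∧ K.Row a w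
  exists_next : ∀ a ∈ K.D w, ∃ b ∈ K.D w, K.Next a b w
  next_persists : ∀ a ∈ K.D w, ∀ b ∈ K.D w, K.Next a b w →
    ∀ v, R w v → ∀ d ∈ K.D v, K.Row d v → K.Next a b v
  row_iff : ∀ a ∈ K.D w, ∀ b ∈ K.D w, K.Next a b w →
    ∀ v, R w v → (K.Row a v ↔ ¬ K.Full v ∧ K.ExactHops (ts.s + 4) (K.Row b) v)
  tile_persists : ∀ a ∈ K.D w, ∀ b ∈ K.D w, ∀ v, R w v → ∀ t : Fin (ts.s + 1),
    K.Row a v → K.Beta t b v → ∀ u, R v u → K.Row a u → K.Beta t b u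
  tile_unique : ∀ a ∈ K.D w, ∀ v, R w v → ∀ t : Fin (ts.s + 1), K.Beta t a v →
    ∀ t' : Fin (ts.s + 1), t' ≠ t → ¬ K.Beta t' a v
  tile_right : ∀ a ∈ K.D w, ∀ b ∈ K.D w, ∀ v, R w v → ∀ t : Fin (ts.s + 1),
    K.Next a b v → K.Beta t a v →
      ∃ t' : Fin (ts.s + 1), ts.right t = ts.left t' ∧ K.Beta t' b v
  tile_up : ∀ a ∈ K.D w, ∀ b ∈ K.D w, ∀ v, R w v → ∀ t : Fin (ts.s + 1),
    K.Row a v → K.Beta t b v → ∀ u, R v u → ∀ d ∈ K.D u, K.Next a d u → K.Row d u →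
      ∃ t' : Fin (ts.s + 1), ts.up t = ts.down t' ∧ K.Beta t' b u

end KModel

section Encoding

variable {W : Type*} {R : W → W → Prop} {ts : TileSet} {K : KModel W R (Letter ts.s)} {w : W}
  {g : ℕ → K.Dom}

@[simp] theorem truth_PP {x : ℕ} : truth K (PP ts x) w g ↔ K.P (g x) w := Iff.rfl

@[simp] theorem truth_MS {x : ℕ} : truth K (MS ts x) w g ↔ K.Row (g x) w := by
  have hargs : (fun i : Fin 0 => g (Fin.elim0 i)) = Fin.elim0 := Subsingleton.elim _ _
  simp [MS, qq, truth, KModel.Row, hargs]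

@[simp] theorem truth_pfS : truth K (pfS ts) w g ↔ K.Full w := by
  simp [pfS, KModel.Full]

@[simp] theorem truth_bdia {φ : F ts} :
    truth K (bdia ts φ) w g ↔ K.hop (fun v => truth K φ v g) w := by
  simp [bdia, pdia, KModel.hop]

@[simp] theorem truth_bdiaN {n : ℕ} {φ : F ts} :
    truth K (bdiaN ts n φ) w g ↔ K.hop^[n] (fun v => truth K φ v g) w := by
  induction n generalizing w with
  | zero => rfl
  | succ n ih =>
    change truth K (bdia ts (bdiaN ts n φ)) w g ↔ _
    simp only [truth_bdia, ih, Function.iterate_succ_apply']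

theorem truth_beta {n : Fin (ts.s + 3)} {x : ℕ} (hx : x ≠ 1 - x) :
    truth K (beta ts n x) w g ↔ K.Beta n (g x) w := by
  simp [beta, KModel.Beta, KModel.ExactHops, Function.update_of_ne hx, and_assoc]

@[simp] theorem truth_PfS_zero {t : Fin (ts.s + 1)} :
    truth K (PfS ts t 0) w g ↔ K.Beta t (g 0) w := truth_beta zero_ne_one

@[simp] theorem truth_PfS_one {t : Fin (ts.s + 1)} :
    truth K (PfS ts t 1) w g ↔ K.Beta t (g 1) w := truth_beta one_ne_zero

@[simp] theorem truth_relS : truth K (relS ts 0 1) w g ↔ K.Next (g 0) (g 1) w := by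
  simp [relS, KModel.Next, truth_beta]

theorem truth_Bstar : truth K (Bstar ts) w g ↔ K.TilingConditions w := by
  simp only [Bstar, truth_bigAnd, BstarList, List.forall_mem_cons]
  simp only [A0g, A1g, A2g, A3g, A4star, A5g, A6g, A7g, A8g, Ug, tiles,
    truth_imp, truth_box, truth_all, truth_neg, truth_and, truth_iff, truth_ex, truth_bigAnd,
    truth_bigOr, truth_MS, truth_pfS, truth_bdiaN, truth_PfS_zero, truth_PfS_one, truth_relS,
    Function.update_self, Function.update_of_ne, Function.update_idem, List.mem_map,
    List.mem_filter, List.mem_finRange, List.not_mem_nil, IsEmpty.forall_iff, true_and, and_true,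
    implies_true, forall_exists_index, forall_apply_eq_imp_iff, forall_apply_eq_imp_iff₂,
    exists_exists_and_eq_and, not_forall, not_not, and_imp, ne_eq, zero_ne_one, not_false_eq_true,
    decide_not, Bool.not_eq_eq_eq_not, Bool.not_true, decide_eq_false_iff_not, decide_eq_true_eq]
  exact ⟨fun ⟨h0, h1, h2, h3, h4, h5, h6, h7, h8⟩ => ⟨h0, h1, h2, h3, h4, h5, h6, h7, h8⟩,
    fun ⟨h0, h1, h2, h3, h4, h5, h6, h7, h8⟩ => ⟨h0, h1, h2, h3, h4, h5, h6, h7, h8⟩⟩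

end Encoding

section Extraction

theorem exists_seq_of_forall_exists {α : Type*} {p : ℕ → α → Prop} {r : α → α → Prop} {x : α}
    (hx : p 0 x) (hstep : ∀ n a, p n a → ∃ b, p (n + 1) b ∧ r a b) :
    ∃ s : ℕ → α, s 0 = x ∧ ∀ n, p n (s n) ∧ r (s n) (s (n + 1)) := by
  have : Nonempty α := ⟨x⟩
  choose! next hp hr using hstep
  let s : ℕ → α := Nat.rec x next
  have hs : ∀ n, p n (s n) := Nat.rec hx fun n ih => hp n (s n) ih
  exact ⟨s, rfl, fun n => ⟨hs n, hr n (s n) (hs n)⟩⟩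

theorem TileSet.exists_tiling_of_propagation {ts : TileSet} {p : Fin (ts.s + 1) → ℕ → ℕ → Prop}
    (horigin : ∃ t, p t 0 0)
    (hunique : ∀ {t t' n m}, p t n m → p t' n m → t' = t)
    (hright : ∀ {t n m}, p t n m → ∃ t', ts.right t = ts.left t' ∧ p t' (n + 1) m)
    (hup : ∀ {t n m}, p t n m → ∃ t', ts.up t = ts.down t' ∧ p t' n (m + 1)) :
    ∃ f : ℕ → ℕ → Fin (ts.s + 1), ts.T1 f ∧ ts.T2 f := by
  have hbottom : ∀ n, ∃ t, p t n 0 := fun n =>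
    Nat.rec horigin (fun n ⟨_, ht⟩ => (hright ht).imp fun _ h => h.2) n
  have htiled : ∀ n m, ∃ t, p t n m := fun n =>
    Nat.rec (hbottom n) fun m ⟨_, ht⟩ => (hup ht).imp fun _ h => h.2
  choose f hf using htiled
  refine ⟨f, fun n m => ?_, fun n m => ?_⟩
  · obtain ⟨t, hcolour, ht⟩ := hright (hf n m)
    rw [hcolour, hunique (hf (n + 1) m) ht]
  · obtain ⟨t, hcolour, ht⟩ := hup (hf n m)
    rw [hcolour, hunique (hf n (m + 1)) ht]

namespace KModel

variable {W : Type*} [Preorder W] {ts : TileSet} {K : KModel W (· ≤ ·) (Letter ts.s)} {w : W}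

theorem exists_ge_of_iterate_hop {n : ℕ} {φ : W → Prop} (h : K.hop^[n] φ w) :
    ∃ v ≥ w, φ v := by
  induction n generalizing w with
  | zero => exact ⟨w, le_rfl, h⟩
  | succ n ih =>
    rw [Function.iterate_succ_apply'] at h
    obtain ⟨v, hwv, -, u, hvu, -, hu⟩ := h
    obtain ⟨z, huz, hz⟩ := ih hu
    exact ⟨z, hwv.trans (hvu.trans huz), hz⟩

namespace TilingConditions

theorem exists_columns (h : K.TilingConditions w) :
    ∃ a : ℕ → K.Dom, (∃ t : Fin (ts.s + 1), K.Beta t (a 0) w) ∧ K.Row (a 0) w ∧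
      ∀ n, a n ∈ K.D w ∧ K.Next (a n) (a (n + 1)) w := by
  obtain ⟨x, hxD, htile, hrow⟩ := h.tiled_row
  obtain ⟨a, rfl, ha⟩ := exists_seq_of_forall_exists (p := fun _ a => a ∈ K.D w)
    (r := fun a b => K.Next a b w) hxD fun _ => h.exists_next
  exact ⟨a, htile, hrow, ha⟩

theorem exists_rows (h : K.TilingConditions w) {a : ℕ → K.Dom} (hrow : K.Row (a 0) w)
    (ha : ∀ n, a n ∈ K.D w ∧ K.Next (a n) (a (n + 1)) w) :
    ∃ v : ℕ → W, v 0 = w ∧ ∀ m, (w ≤ v m ∧ K.Row (a m) (v m)) ∧ v m ≤ v (m + 1) := by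
  refine exists_seq_of_forall_exists (p := fun m v => w ≤ v ∧ K.Row (a m) v)
    ⟨le_rfl, hrow⟩ fun m v ⟨hwv, hv⟩ => ?_
  have hhops := ((h.row_iff _ (ha m).1 _ (ha (m + 1)).1 (ha m).2 v hwv).1 hv).2
  obtain ⟨u, hvu, hu⟩ := exists_ge_of_iterate_hop hhops.1
  exact ⟨u, ⟨hwv.trans hvu, hu⟩, hvu⟩

theorem exists_tiling (h : K.TilingConditions w) :
    ∃ f : ℕ → ℕ → Fin (ts.s + 1), ts.T1 f ∧ ts.T2 f := by
  obtain ⟨a, htile, hrow, ha⟩ := h.exists_columns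
  obtain ⟨v, rfl, hv⟩ := h.exists_rows hrow ha
  have hD : ∀ n m, a n ∈ K.D (v m) := fun n m => K.D_mono (hv m).1.1 (ha n).1
  have hnext : ∀ n m, K.Next (a n) (a (n + 1)) (v m) := fun n m =>
    h.next_persists _ (ha n).1 _ (ha (n + 1)).1 (ha n).2 _ (hv m).1.1 _ (hD m m) (hv m).1.2
  refine ts.exists_tiling_of_propagation (p := fun t n m => K.Beta t (a n) (v m)) htile ?_ ?_ ?_
  · intro t t' n m ht ht'
    by_contra hne
    exact h.tile_unique _ (ha n).1 _ (hv m).1.1 t ht t' hne ht'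
  · intro t n m ht
    exact h.tile_right _ (ha n).1 _ (ha (n + 1)).1 _ (hv m).1.1 t (hnext n m) ht
  · intro t n m ht
    exact h.tile_up _ (ha m).1 _ (ha n).1 _ (hv m).1.1 t (hv m).1.2 ht _ (hv m).2
      _ (hD (m + 1) (m + 1)) (hnext m (m + 1)) (hv (m + 1)).1.2

end TilingConditions

end KModel

end Extraction

section Stages

variable {W : Type*} [Preorder W] {c : ℕ → W} {w : W} {i j k l : ℕ}

/-- The element `c i` is the first element of the chain `c` above `w`. -/
def Level (c : ℕ → W) (w : W) (i : ℕ) : Prop := IsLeast {j | w ≤ c j} i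

/-- The chain `c` is counted in stages of two elements: `w` is at stage `k` if its level is `2k` or
`2k + 1`. -/
def Stage (c : ℕ → W) (k : ℕ) (w : W) : Prop := ∃ i, Level c w i ∧ i / 2 = k

theorem exists_level_le (h : w ≤ c j) : ∃ i ≤ j, Level c w i := by
  classical
  have hex : ∃ j, w ≤ c j := ⟨j, h⟩
  exact ⟨Nat.find hex, Nat.find_min' hex h, Nat.find_spec hex, fun _ => Nat.find_min' hex⟩

theorem level_chain (hc : StrictMono c) (i : ℕ) : Level c (c i) i :=
  ⟨le_rfl, fun _ => hc.le_iff_le.1⟩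

theorem Level.le_chain (h : Level c w i) (hc : Monotone c) (hij : i ≤ j) : w ≤ c j :=
  h.1.trans (hc hij)

theorem Level.stage (h : Level c w (2 * k)) : Stage c k w := ⟨2 * k, h, by omega⟩

theorem Stage.unique (hk : Stage c k w) (hl : Stage c l w) : k = l := by
  obtain ⟨i, hi, rfl⟩ := hk
  obtain ⟨j, hj, rfl⟩ := hl
  rw [hi.unique hj]

end Stages

section Model

/-- An enumeration of `Option ℕ` taking every value infinitely often. -/
def recurrentEnum (m : ℕ) : Option ℕ := Denumerable.ofNat (Option ℕ) m.unpair.1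

theorem exists_ge_recurrentEnum_eq (x : Option ℕ) (b : ℕ) : ∃ m ≥ b, recurrentEnum m = x :=
  ⟨Nat.pair (Encodable.encode x) b, Nat.right_le_pair _ _, by simp [recurrentEnum]⟩

variable {ts : TileSet} {f : ℕ → ℕ → Fin (ts.s + 1)} {k n m : ℕ} {x : Option ℕ}

/-- The elements that satisfy `βₙ` in block `m` of the model of the tiling `f`: for `n ≤ s` the
columns whose tile in row `m` is `tₙ`, and for `n = s + 1` and `n = s + 2` the two members of a
single pair related by `◁`. The extra value `n = s + 3` yields the column whose index is `m`. -/
def blockLetter (f : ℕ → ℕ → Fin (ts.s + 1)) (n m : ℕ) : Set (Option ℕ) :=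
  if n ≤ ts.s then {x | ∃ a, x = some a ∧ (f a m : ℕ) = n}
  else if n = ts.s + 1 then {recurrentEnum m}
  else if n = ts.s + 2 then {(recurrentEnum m).map Nat.succ}
  else {some m}

theorem mem_blockLetter_of_le (hn : n ≤ ts.s) :
    x ∈ blockLetter f n m ↔ ∃ a, x = some a ∧ (f a m : ℕ) = n := by
  simp [blockLetter, hn]

theorem blockLetter_succ : blockLetter f (ts.s + 1) m = {recurrentEnum m} := by
  simp [blockLetter]

theorem blockLetter_add_two :
    blockLetter f (ts.s + 2) m = {(recurrentEnum m).map Nat.succ} := by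
  simp [blockLetter]

theorem blockLetter_add_three : blockLetter f (ts.s + 3) m = {some m} := by
  simp [blockLetter]

theorem exists_notMem_blockLetter (f : ℕ → ℕ → Fin (ts.s + 1)) (n m : ℕ) :
    ∃ x, x ∉ blockLetter f n m := by
  unfold blockLetter
  split_ifs
  · exact ⟨none, by simp⟩
  all_goals exact exists_ne _

/-- The extension of `P` at stage `k`. The stages are grouped in blocks of `s + 4`, and
`blockLetter f n m` is put `n + 1` stages before the end of block `m`. -/
def stageLetter (f : ℕ → ℕ → Fin (ts.s + 1)) (k : ℕ) : Set (Option ℕ) :=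
  blockLetter f (ts.s + 3 - k % (ts.s + 4)) (k / (ts.s + 4))

theorem stageLetter_eq_blockLetter (hn : n ≤ ts.s + 3) (h : k + n + 1 = (ts.s + 4) * (m + 1)) :
    stageLetter f k = blockLetter f n m := by
  have hk : k = (ts.s + 3 - n) + (ts.s + 4) * m := by
    rw [mul_add_one] at h
    omega
  have hmod : k % (ts.s + 4) = ts.s + 3 - n := by
    rw [hk, Nat.add_mul_mod_self_left, Nat.mod_eq_of_lt (by omega)]
  have hdiv : k / (ts.s + 4) = m := by
    rw [hk, Nat.add_mul_div_left _ _ (by omega), Nat.div_eq_of_lt (by omega), zero_add]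
  rw [stageLetter, hmod, hdiv, Nat.sub_sub_self hn]

variable {W : Type*} [Preorder W] {c : ℕ → W} {w : W}

/-- The model of the tiling `f` along the chain `c`. The element `some a` is the column `a`, and
`none` is the untiled element that `A₀` asks for. -/
abbrev tilingModel (c : ℕ → W) (f : ℕ → ℕ → Fin (ts.s + 1)) :
    KModel W (· ≤ ·) (Letter ts.s) where
  Dom := Option ℕ
  D _ := Set.univ
  D_ne _ := Set.univ_nonempty
  D_mono _ _ _ := subset_rfl
  I w
    | _, .Pm, x => ∀ k, Level c w (2 * k) → x 0 ∈ stageLetter f k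
    | _, .q, _ => ∃ m, Level c w (2 * ((ts.s + 4) * m))
    | _, _, _ => False
  I_dom _ _ _ _ _ _ := trivial

namespace tilingModel

theorem full_iff : (tilingModel c f).Full w ↔ ¬ ∃ k, Level c w (2 * k) := by
  refine ⟨fun h ⟨k, hk⟩ => ?_, fun h x _ k hk => absurd ⟨k, hk⟩ h⟩
  obtain ⟨x, hx⟩ := exists_notMem_blockLetter f (ts.s + 3 - k % (ts.s + 4)) (k / (ts.s + 4))
  exact hx (h x trivial k hk)

theorem row_iff :
    (tilingModel c f).Row x w ↔ ∃ m, x = some m ∧ Level c w (2 * ((ts.s + 4) * m)) := by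
  have hrow : ∀ m, stageLetter f ((ts.s + 4) * m) = {some m} := fun m => by
    rw [stageLetter_eq_blockLetter (m := m) le_rfl (by ring), blockLetter_add_three]
  constructor
  · rintro ⟨⟨m, hm⟩, hP⟩
    have hx : x ∈ stageLetter f ((ts.s + 4) * m) := hP _ hm
    exact ⟨m, by simpa [hrow] using hx, hm⟩
  · rintro ⟨m, rfl, hm⟩
    refine ⟨⟨m, hm⟩, fun k hk => ?_⟩
    obtain rfl := hk.stage.unique hm.stage
    simp [hrow]

theorem hop_iff (hc : StrictMono c) {φ : W → Prop} {ψ : ℕ → Prop}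
    (hφψ : ∀ u k, Level c u (2 * k) → (φ u ↔ ψ k)) :
    (tilingModel c f).hop φ w ↔ ∃ j, Stage c j w ∧ ∃ k, j < k ∧ ψ k := by
  constructor
  · rintro ⟨v, hwv, hv, u, hvu, hu, hφ⟩
    rw [full_iff] at hv hu
    obtain ⟨k, hk⟩ := not_not.1 hu
    obtain ⟨i, hik, hi⟩ := exists_level_le (hvu.trans hk.1)
    obtain ⟨j, hji, hj⟩ := exists_level_le (hwv.trans hi.1)
    have hne : i ≠ 2 * k := fun h => hv ⟨k, h ▸ hi⟩
    exact ⟨j / 2, ⟨j, hj, rfl⟩, k, by omega, (hφψ u k hk).1 hφ⟩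
  · rintro ⟨_, ⟨i, hi, rfl⟩, k, hk, hψ⟩
    have hfull : (tilingModel c f).Full (c (2 * k - 1)) := full_iff.2 fun ⟨l, hl⟩ => by
      have := hl.unique (level_chain hc _)
      omega
    have hnotFull : ¬ (tilingModel c f).Full (c (2 * k)) := fun h =>
      full_iff.1 h ⟨k, level_chain hc _⟩
    exact ⟨_, hi.le_chain hc.monotone (by omega), hfull, _, hc.monotone (by omega), hnotFull,
      (hφψ _ k (level_chain hc _)).2 hψ⟩

theorem iterate_hop_row_iff (hc : StrictMono c) :
    (tilingModel c f).hop^[n + 1] ((tilingModel c f).Row x) w ↔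
      ∃ j m, x = some m ∧ Stage c j w ∧ j + n + 1 ≤ (ts.s + 4) * m := by
  induction n generalizing w with
  | zero =>
    have hrow : ∀ u k, Level c u (2 * k) →
        ((tilingModel c f).Row x u ↔ ∃ m, x = some m ∧ k = (ts.s + 4) * m) := by
      intro u k hk
      refine row_iff.trans (exists_congr fun m => and_congr_right fun _ => ?_)
      exact ⟨fun h => hk.stage.unique h.stage, fun h => h ▸ hk⟩
    rw [zero_add, Function.iterate_one, hop_iff hc hrow]
    grind
  | succ n ih =>
    have hhops : ∀ u k, Level c u (2 * k) →
        ((tilingModel c f).hop^[n + 1] ((tilingModel c f).Row x) u ↔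
          ∃ m, x = some m ∧ k + n + 1 ≤ (ts.s + 4) * m) := by
      intro u k hk
      rw [ih]
      exact ⟨fun ⟨j, m, hx, hj, h⟩ => ⟨m, hx, hk.stage.unique hj ▸ h⟩,
        fun ⟨m, hx, h⟩ => ⟨k, m, hx, hk.stage, h⟩⟩
    rw [Function.iterate_succ_apply', hop_iff hc hhops]
    constructor
    · rintro ⟨j, hj, k, hjk, m, hx, h⟩
      exact ⟨j, m, hx, hj, by omega⟩
    · rintro ⟨j, m, hx, hj, h⟩
      exact ⟨j, hj, j + 1, by omega, m, hx, by omega⟩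

theorem exactHops_row_iff (hc : StrictMono c) :
    (tilingModel c f).ExactHops (n + 1) ((tilingModel c f).Row x) w ↔
      ∃ j m, x = some m ∧ Stage c j w ∧ j + n + 1 = (ts.s + 4) * m := by
  rw [KModel.ExactHops, iterate_hop_row_iff hc, iterate_hop_row_iff hc]
  constructor
  · rintro ⟨⟨j, m, hx, hj, hle⟩, hmax⟩
    have hlt : ¬ j + (n + 1) + 1 ≤ (ts.s + 4) * m := fun h => hmax ⟨j, m, hx, hj, h⟩
    exact ⟨j, m, hx, hj, by omega⟩
  · rintro ⟨j, m, rfl, hj, heq⟩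
    refine ⟨⟨j, m, rfl, hj, heq.le⟩, ?_⟩
    rintro ⟨j', m', hm', hj', hle⟩
    obtain rfl := hj.unique hj'
    obtain rfl := Option.some.inj hm'
    omega

theorem beta_iff (hc : StrictMono c) (hn : n ≤ ts.s + 2) :
    (tilingModel c f).Beta n x w ↔ ∃ m, Stage c ((ts.s + 4) * m) w ∧ x ∈ blockLetter f n m := by
  have hlisted : ∀ d u k, Level c u (2 * k) →
      ((tilingModel c f).ExactHops (n + 1) ((tilingModel c f).Row d) u ∧ (tilingModel c f).P x u ↔
        ∃ m, d = some m ∧ k + n + 1 = (ts.s + 4) * m ∧ x ∈ stageLetter f k) := by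
    intro d u k hk
    rw [exactHops_row_iff hc]
    constructor
    · rintro ⟨⟨j, m, hd, hj, h⟩, hP⟩
      exact ⟨m, hd, hk.stage.unique hj ▸ h, hP k hk⟩
    · rintro ⟨m, hd, h, hx⟩
      exact ⟨⟨k, m, hd, hk.stage, h⟩, fun l hl => hk.stage.unique hl.stage ▸ hx⟩
  simp only [KModel.Beta, hop_iff hc (hlisted _)]
  simp only [exactHops_row_iff hc]
  constructor
  · rintro ⟨_, -, ⟨j, m, rfl, hj, hblock⟩, _, -, k, -, m', hm', hk, hx⟩
    obtain rfl := Option.some.inj hm'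
    obtain ⟨m, rfl⟩ : ∃ i, m = i + 1 := Nat.exists_eq_succ_of_ne_zero (by grind)
    obtain rfl : j = (ts.s + 4) * m := by grind
    exact ⟨m, hj, stageLetter_eq_blockLetter (by omega) hk ▸ hx⟩
  · rintro ⟨m, hj, hx⟩
    obtain ⟨k, hk⟩ : ∃ k, k + n + 1 = (ts.s + 4) * (m + 1) :=
      ⟨(ts.s + 4) * m + (ts.s + 3 - n), by rw [mul_add_one]; omega⟩
    exact ⟨some (m + 1), trivial, ⟨_, _, rfl, hj, by ring⟩, _, hj, k, by grind, _, rfl, hk,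
      (stageLetter_eq_blockLetter (by omega) hk).symm ▸ hx⟩

theorem beta_tile_iff (hc : StrictMono c) {t : Fin (ts.s + 1)} :
    (tilingModel c f).Beta t x w ↔
      ∃ m a, Stage c ((ts.s + 4) * m) w ∧ x = some a ∧ f a m = t := by
  simp only [beta_iff hc (by omega : (t : ℕ) ≤ ts.s + 2), mem_blockLetter_of_le t.is_le,
    Fin.ext_iff, exists_and_left]

theorem eq_of_stage_block {m' : ℕ} (hm : Stage c ((ts.s + 4) * m) w)
    (hm' : Stage c ((ts.s + 4) * m') w) : m = m' :=
  Nat.eq_of_mul_eq_mul_left (by omega) (hm.unique hm')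

theorem beta_tile_iff_of_row (hc : StrictMono c) {t : Fin (ts.s + 1)}
    (hrow : (tilingModel c f).Row (some m) w) :
    (tilingModel c f).Beta t x w ↔ ∃ a, x = some a ∧ f a m = t := by
  obtain ⟨_, hm, hlevel⟩ := row_iff.1 hrow
  obtain rfl := Option.some.inj hm
  rw [beta_tile_iff hc]
  constructor
  · rintro ⟨m', a, hm', ha⟩
    obtain rfl := eq_of_stage_block hlevel.stage hm'
    exact ⟨a, ha⟩
  · rintro ⟨a, ha⟩
    exact ⟨m, a, hlevel.stage, ha⟩

theorem next_iff (hc : StrictMono c) {y : Option ℕ} :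
    (tilingModel c f).Next x y w ↔ (∃ j, Stage c j w) ∧ y = x.map Nat.succ := by
  have hpair : ∀ u k, Level c u (2 * k) →
      ((tilingModel c f).Beta (ts.s + 1) x u ∧ (tilingModel c f).Beta (ts.s + 2) y u ↔
        ∃ m, k = (ts.s + 4) * m ∧ recurrentEnum m = x ∧ y = x.map Nat.succ) := by
    intro u k hk
    rw [beta_iff hc (by omega), beta_iff hc le_rfl]
    simp only [blockLetter_succ, blockLetter_add_two, Set.mem_singleton_iff]
    constructor
    · rintro ⟨⟨m, hm, rfl⟩, m', hm', rfl⟩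
      obtain rfl := eq_of_stage_block hm hm'
      exact ⟨m, hk.stage.unique hm, rfl, rfl⟩
    · rintro ⟨m, rfl, rfl, rfl⟩
      exact ⟨⟨m, hk.stage, rfl⟩, m, hk.stage, rfl⟩
  rw [KModel.Next, hop_iff hc hpair]
  constructor
  · rintro ⟨j, hj, -, -, -, -, -, hy⟩
    exact ⟨⟨j, hj⟩, hy⟩
  · rintro ⟨⟨j, hj⟩, hy⟩
    obtain ⟨m, hm, hx⟩ := exists_ge_recurrentEnum_eq x (j + 1)
    exact ⟨j, hj, (ts.s + 4) * m, by nlinarith, m, rfl, hx, hy⟩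

theorem row_iff_exactHops_row_succ (hc : StrictMono c) :
    (tilingModel c f).Row x w ↔ ¬ (tilingModel c f).Full w ∧
      (tilingModel c f).ExactHops (ts.s + 4) ((tilingModel c f).Row (x.map Nat.succ)) w := by
  rw [row_iff, full_iff, not_not, exactHops_row_iff hc]
  constructor
  · rintro ⟨m, rfl, hm⟩
    exact ⟨⟨_, hm⟩, _, m + 1, rfl, hm.stage, by ring⟩
  · rintro ⟨⟨k, hk⟩, j, _, hx, hj, h⟩
    obtain ⟨m, rfl, rfl⟩ := Option.map_eq_some_iff.1 hx
    obtain rfl := hk.stage.unique hj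
    obtain rfl : k = (ts.s + 4) * m := by grind
    exact ⟨m, rfl, hk⟩

theorem tilingConditions (hc : StrictMono c) (h1 : ts.T1 f) (h2 : ts.T2 f) :
    (tilingModel c f).TilingConditions (c 0) where
  untiled := ⟨none, trivial, fun v _ t => by simp [beta_tile_iff hc]⟩
  tiled_row := by
    have hlevel : Level c (c 0) (2 * ((ts.s + 4) * 0)) := level_chain hc 0
    exact ⟨some 0, trivial, ⟨f 0 0, (beta_tile_iff hc).2 ⟨0, 0, hlevel.stage, rfl, rfl⟩⟩,
      row_iff.2 ⟨0, rfl, hlevel⟩⟩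
  exists_next x _ := ⟨Option.map Nat.succ x, trivial,
    (next_iff hc).2 ⟨⟨0, (level_chain hc 0).stage⟩, rfl⟩⟩
  next_persists x _ y _ hxy v _ d _ hd := by
    obtain ⟨m, -, hm⟩ := row_iff.1 hd
    exact (next_iff hc).2 ⟨⟨_, hm.stage⟩, ((next_iff hc).1 hxy).2⟩
  row_iff x _ y _ hxy v _ := by
    obtain rfl := ((next_iff hc).1 hxy).2
    exact row_iff_exactHops_row_succ hc
  tile_persists x _ y _ v _ t hxv htv u _ hxu := by
    obtain ⟨m, rfl, -⟩ := row_iff.1 hxv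
    exact (beta_tile_iff_of_row hc hxu).2 ((beta_tile_iff_of_row hc hxv).1 htv)
  tile_unique x _ v _ t ht t' hne ht' := by
    obtain ⟨m, a, hm, rfl, rfl⟩ := (beta_tile_iff hc).1 ht
    obtain ⟨m', a', hm', ha, rfl⟩ := (beta_tile_iff hc).1 ht'
    obtain rfl := Option.some.inj ha
    exact hne (by rw [eq_of_stage_block hm hm'])
  tile_right x _ y _ v _ t hxy ht := by
    obtain ⟨m, a, hm, rfl, rfl⟩ := (beta_tile_iff hc).1 ht
    exact ⟨f (a + 1) m, h1 a m,
      (beta_tile_iff hc).2 ⟨m, a + 1, hm, ((next_iff hc).1 hxy).2, rfl⟩⟩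
  tile_up x _ y _ v _ t hxv ht u _ d _ hxd hdu := by
    obtain ⟨m, rfl, -⟩ := row_iff.1 hxv
    obtain ⟨a, rfl, rfl⟩ := (beta_tile_iff_of_row hc hxv).1 ht
    obtain rfl := ((next_iff hc).1 hxd).2
    exact ⟨f a (m + 1), h2 a m, (beta_tile_iff_of_row hc hdu).2 ⟨a, rfl, rfl⟩⟩

end tilingModel

end Model

theorem reflGen_eq_le {W : Type*} [PartialOrder W] {R : W → W → Prop}
    (hltR : ∀ a b, a < b → R a b) (hRle : ∀ a b, R a b → a ≤ b) :
    Relation.ReflGen R = (· ≤ ·) := by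
  ext a b
  constructor
  · rintro (_ | h)
    exacts [le_rfl, hRle a b h]
  · intro h
    obtain rfl | h := h.eq_or_lt
    exacts [.refl, .single (hltR a b h)]

theorem statement12_general {W : Type*} [Preorder W] {c : ℕ → W} (hc : StrictMono c)
    {R : W → W → Prop} (hR : Relation.ReflGen R = (· ≤ ·)) (ts : TileSet)
    (L : Set (Fml (Letter ts.s))) (hL1 : ∀ φ : Fml (Letter ts.s), ValidOn R φ → φ ∈ L)
    (hL2 : ∀ φ ∈ L, ValidOnC R φ) :
    Fml.neg (Bplus ts) ∈ L ↔ ¬ ∃ f : ℕ → ℕ → Fin (ts.s + 1), ts.T1 f ∧ ts.T2 f := by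
  change (Fml.neg (Bstar ts)).plus ∈ L ↔ _
  constructor
  · rintro hmem ⟨f, h1, h2⟩
    have hvalid : ValidOnC (W := W) (· ≤ ·) (Fml.neg (Bstar ts)) := by
      rw [← hR]
      exact validOnC_plus.1 (hL2 _ hmem)
    exact hvalid (tilingModel c f) (fun _ _ => rfl) (c 0) (fun _ => none) (fun _ => trivial)
      (truth_Bstar.2 (tilingModel.tilingConditions hc h1 h2))
  · intro hno
    have hvalid : ValidOn (W := W) (· ≤ ·) (Fml.neg (Bstar ts)) := fun K w g _ hB =>
      hno (truth_Bstar.1 hB).exists_tiling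
    exact hL1 _ (validOn_plus.2 (hR ▸ hvalid))

/-- let `⟨W,<⟩` be a strict linear order containing an infinite ascending
chain of pairwise distinct elements, `≤` its reflexive closure, `R` a relation with
`< ⊆ R ⊆ ≤`, and `L` a set of formulas with `L(W,R) ⊆ L ⊆ L_c(W,R)`. Then `¬B⁺ ∈ L`
iff there is no function `f : ℕ×ℕ → T` satisfying (T1) and (T2). -/
theorem statement12 (W : Type*) (lt : W → W → Prop)
    (hirr : ∀ a, ¬ lt a a)
    (htrans : ∀ a b c, lt a b → lt b c → lt a c)
    (htotal : ∀ a b, a ≠ b → lt a b ∨ lt b a)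
    (c : ℕ → W) (hchain : ∀ n, lt (c n) (c (n + 1))) (hinj : Function.Injective c)
    (R : W → W → Prop)
    (hR1 : ∀ a b, lt a b → R a b) (hR2 : ∀ a b, R a b → lt a b ∨ a = b)
    (ts : TileSet) (L : Set (Fml (Letter ts.s)))
    (hL1 : ∀ φ : Fml (Letter ts.s), ValidOn R φ → φ ∈ L)
    (hL2 : ∀ φ ∈ L, ValidOnC R φ) :
    Fml.neg (Bplus ts) ∈ L ↔
      ¬ ∃ f : ℕ → ℕ → Fin (ts.s + 1), ts.T1 f ∧ ts.T2 f := by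
  let : PartialOrder W :=
    haveI : IsStrictOrder W lt := { irrefl := hirr, trans := htrans }
    partialOrderOfSO lt
  have hRle : ∀ a b, R a b → a ≤ b := fun a b h => (hR2 a b h).symm
  exact statement12_general (strictMono_nat_of_lt_succ hchain) (reflGen_eq_le hR1 hRle) ts L hL1 hL2

end FOML
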